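/- arXiv:1712.06403 — 2 statements merged into one kernel-verified Lean document; each statement's English description precedes it below -/
import Mathlib

section
/- Let r = 4d + 1 with d ≥ 1 an integer, and let 0 ≤ α < 1. Suppose that for every ε > 0 there exists N such that for all even n ≥ N and every partition of [n] into two disjoint sets S and T of size n/2 each, the family ((S choose ⌊r/2⌋) × (T choose ⌈r/2⌉)) ∪ ((S choose ⌈r/2⌉) × (T choose ⌊r/2⌋)) can be exactly covered using at most α · (1 + ε) · C(n/2, ⌊r/4⌋)² complete r-partite r-graphs. Then there is a constant c_r(α) < 1, namely c_r(α) = 1 − (1 − α)/e^(r/2), such that for every ε > 0 there exists M with f_r(n) ≤ c_r(α) · (1 + ε) · C(n, ⌊r/2⌋) for all n ≥ M, where C(n, k) denotes the binomial coefficient. -/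
/-- A complete `r`-partite `r`-graph (a "block") on a finite vertex set `V ⊆ ℕ`:
it is determined by `r` pairwise disjoint nonempty subsets of `V`. -/
structure Block (V : Finset ℕ) (r : ℕ) where
  parts : Fin r → Finset ℕ
  nonempty : ∀ i, (parts i).Nonempty
  subset : ∀ i, parts i ⊆ V
  disj : ∀ i j, i ≠ j → Disjoint (parts i) (parts j)

/-- The edge set of a block: all sets contained in the union of the parts
meeting each part in exactly one vertex. -/
def Block.edges {V : Finset ℕ} {r : ℕ} (B : Block V r) : Set (Finset ℕ) :=
  {X | (∀ i, (X ∩ B.parts i).card = 1) ∧ ∀ x ∈ X, ∃ i, x ∈ B.parts i}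

/-- `ExactCover V r k F` : there are `k` complete `r`-partite `r`-graphs on `V`
whose edge sets are pairwise disjoint and whose union is the family `F`. -/
def ExactCover (V : Finset ℕ) (r k : ℕ) (F : Set (Finset ℕ)) : Prop :=
  ∃ B : Fin k → Block V r,
    (∀ i j, i ≠ j → Disjoint (B i).edges (B j).edges) ∧
    (⋃ i, (B i).edges) = F

/-- `f r n` : the minimum number of complete `r`-partite `r`-graphs needed to
partition the edge set of the complete `r`-uniform hypergraph on `[n]`. -/
noncomputable def f (r n : ℕ) : ℕ :=
  sInf {k | ExactCover (Finset.range n) r k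
    {X | X ⊆ Finset.range n ∧ X.card = r}}

open Finset in
lemma card_filter_odd_range (n : ℕ) : #{i ∈ range n | i % 2 = 1} = n / 2 := by
  induction n with
  | zero => simp
  | succ n ih =>
    rw [range_add_one, filter_insert]
    split_ifs with h
    · rw [card_insert_of_notMem (by simp), ih]; omega
    · rw [ih]; omega

/-- The number of elements of `X` below `x`. -/
def rankIn (X : Finset ℕ) (x : ℕ) : ℕ := (X.filter (· < x)).card

/-- The elements of `X` whose rank in `X` is odd. -/
def oddRank (X : Finset ℕ) : Finset ℕ := X.filter (fun x => rankIn X x % 2 = 1)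

/-- The position of `x` relative to `E`: odd at the elements of `E`,
and even on the gaps between them. -/
def gapPos (E : Finset ℕ) (x : ℕ) : ℕ := (E.filter (· < x)).card + (E.filter (· ≤ x)).card

/-- The parts of the (possibly degenerate) block whose odd parts are the elements of `E` and whose
even parts are the gaps between them. -/
def gapParts (V E : Finset ℕ) (r : ℕ) (i : Fin r) : Finset ℕ := V.filter (fun x => gapPos E x = i)

/-- The edges of the block with the given parts, some of which may be empty. -/
def partsEdges {r : ℕ} (p : Fin r → Finset ℕ) : Set (Finset ℕ) :=
  {X | (∀ i, (X ∩ p i).card = 1) ∧ ∀ x ∈ X, ∃ i, x ∈ p i}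

section Rank

open Finset

lemma rankIn_strictMonoOn (X : Finset ℕ) : StrictMonoOn (rankIn X) X := by
  intro x hx y _ hxy
  refine card_lt_card ((ssubset_iff_of_subset ?_).2 ⟨x, ?_, ?_⟩)
  · intro z hz
    simp only [mem_filter] at hz ⊢
    exact ⟨hz.1, hz.2.trans hxy⟩
  · simpa using ⟨hx, hxy⟩
  · simp

lemma image_rankIn_filter_lt (X : Finset ℕ) (t : ℕ) :
    (X.filter (· < t)).image (rankIn X) = range (rankIn X t) := by
  apply eq_of_subset_of_card_le
  · intro i hi
    obtain ⟨y, hy, rfl⟩ := mem_image.1 hi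
    rw [mem_filter] at hy
    refine mem_range.2 (card_lt_card ((ssubset_iff_of_subset ?_).2 ⟨y, ?_, ?_⟩))
    · intro z hz
      simp only [mem_filter] at hz ⊢
      exact ⟨hz.1, hz.2.trans hy.2⟩
    · simpa using hy
    · simp
  · rw [card_range, card_image_of_injOn]
    · rfl
    · exact (rankIn_strictMonoOn X).injOn.mono (by simp [Set.subset_def]; tauto)

lemma card_oddRank_filter_lt (X : Finset ℕ) (t : ℕ) :
    #{y ∈ oddRank X | y < t} = rankIn X t / 2 := by
  rw [← card_filter_odd_range, ← image_rankIn_filter_lt, filter_image, card_image_of_injOn]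
  · congr 1
    ext y
    simp only [oddRank, mem_filter]
    tauto
  · exact (rankIn_strictMonoOn X).injOn.mono (by simp [Set.subset_def]; tauto)

lemma card_filter_le_eq (E : Finset ℕ) (x : ℕ) :
    #{y ∈ E | y ≤ x} = #{y ∈ E | y < x} + if x ∈ E then 1 else 0 := by
  split_ifs with h
  · rw [← card_insert_of_notMem (s := {y ∈ E | y < x}) (a := x) (by simp)]
    congr 1
    ext y
    simp only [mem_filter, mem_insert, le_iff_lt_or_eq]
    grind
  · congr 1
    ext y
    simp only [mem_filter, le_iff_lt_or_eq]
    grind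

lemma gapPos_mod_two (E : Finset ℕ) (x : ℕ) : gapPos E x % 2 = 1 ↔ x ∈ E := by
  rw [gapPos, card_filter_le_eq]
  split_ifs with h <;> simp only [h, iff_true, iff_false] <;> omega

lemma gapPos_mono (E : Finset ℕ) : Monotone (gapPos E) := by
  intro x y hxy
  refine Nat.add_le_add (card_le_card ?_) (card_le_card ?_) <;> intro z hz <;>
    simp only [mem_filter] at hz ⊢
  · exact ⟨hz.1, hz.2.trans_le hxy⟩
  · exact ⟨hz.1, hz.2.trans hxy⟩

lemma gapPos_le (E : Finset ℕ) (x : ℕ) : gapPos E x ≤ 2 * #E := by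
  have h₁ : #{y ∈ E | y < x} ≤ #E := card_filter_le _ _
  have h₂ : #{y ∈ E | y ≤ x} ≤ #E := card_filter_le _ _
  simp only [gapPos]
  omega

lemma gapPos_oddRank {X : Finset ℕ} {x : ℕ} (hx : x ∈ X) : gapPos (oddRank X) x = rankIn X x := by
  rw [gapPos, card_filter_le_eq, card_oddRank_filter_lt]
  simp only [oddRank, mem_filter, hx, true_and]
  split_ifs <;> omega

lemma image_rankIn (X : Finset ℕ) : X.image (rankIn X) = range #X := by
  have h : X.filter (· < X.sup id + 1) = X :=
    filter_true_of_mem fun x hx => Nat.lt_succ_of_le (le_sup (f := id) hx)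
  have := image_rankIn_filter_lt X (X.sup id + 1)
  rwa [rankIn, h] at this

lemma card_oddRank (X : Finset ℕ) : #(oddRank X) = #X / 2 := by
  rw [← card_filter_odd_range, ← image_rankIn, filter_image, card_image_of_injOn]
  · rfl
  · exact (rankIn_strictMonoOn X).injOn.mono (by simp [Set.subset_def]; tauto)

lemma eq_oddRank_of_bijOn {X E : Finset ℕ} (hinj : Set.InjOn (gapPos E) X)
    (him : X.image (gapPos E) = range (2 * #E + 1)) : E = oddRank X := by
  have hrank : ∀ x ∈ X, rankIn X x = gapPos E x := by
    intro x hx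
    have hlt : (X.filter (· < x)).image (gapPos E) = range (gapPos E x) := by
      ext i
      simp only [mem_image, mem_filter, mem_range]
      constructor
      · rintro ⟨y, ⟨hy, hyx⟩, rfl⟩
        exact lt_of_le_of_ne (gapPos_mono E hyx.le) fun h => hyx.ne (hinj hy hx h)
      · intro hi
        have : i ∈ X.image (gapPos E) := by
          rw [him, mem_range]
          have := gapPos_le E x
          omega
        obtain ⟨y, hy, rfl⟩ := mem_image.1 this
        exact ⟨y, ⟨hy, (gapPos_mono E).reflect_lt hi⟩, rfl⟩
    rw [← card_range (gapPos E x), ← hlt, card_image_of_injOn]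
    · rfl
    · exact hinj.mono (by simp [Set.subset_def]; tauto)
  have hX : #X = 2 * #E + 1 := by rw [← card_range (2 * #E + 1), ← him, card_image_of_injOn hinj]
  symm
  apply eq_of_subset_of_card_le
  · intro x hx
    rw [oddRank, mem_filter] at hx
    rw [← gapPos_mod_two, ← hrank x hx.1]
    exact hx.2
  · rw [card_oddRank, hX]
    omega

lemma mem_partsEdges_gapParts {V E X : Finset ℕ} {r : ℕ} (hr : r = 2 * #E + 1) :
    X ∈ partsEdges (gapParts V E r) ↔ X ⊆ V ∧ #X = r ∧ E = oddRank X := by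
  subst hr
  have hfib (hXV : X ⊆ V) (i : Fin (2 * #E + 1)) :
      X ∩ gapParts V E _ i = X.filter (fun x => gapPos E x = i) := by
    ext x
    simp only [gapParts, mem_inter, mem_filter]
    exact ⟨fun h => ⟨h.1, h.2.2⟩, fun h => ⟨h.1, hXV h.1, h.2⟩⟩
  constructor
  · rintro ⟨hone, hcov⟩
    have hXV : X ⊆ V := fun x hx => by
      obtain ⟨i, hi⟩ := hcov x hx
      exact (mem_filter.1 hi).1
    have hinj : Set.InjOn (gapPos E) X := by
      intro x hx y hy hxy
      have h := hone ⟨gapPos E x, Nat.lt_succ_of_le (gapPos_le E x)⟩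
      rw [hfib hXV] at h
      exact card_le_one.1 h.le x (by simpa using hx) y (by simpa [hxy] using hy)
    have him : X.image (gapPos E) = range (2 * #E + 1) := by
      ext i
      simp only [mem_image, mem_range]
      constructor
      · rintro ⟨x, -, rfl⟩
        exact Nat.lt_succ_of_le (gapPos_le E x)
      · intro hi
        have h := hone ⟨i, hi⟩
        rw [hfib hXV] at h
        obtain ⟨x, hx⟩ := card_pos.1 (h ▸ Nat.one_pos)
        exact ⟨x, mem_filter.1 hx⟩
    refine ⟨hXV, ?_, eq_oddRank_of_bijOn hinj him⟩
    rw [← card_image_of_injOn hinj, him, card_range]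
  · rintro ⟨hXV, hX, hE⟩
    have hpos : ∀ x ∈ X, gapPos E x = rankIn X x := fun x hx => hE ▸ gapPos_oddRank hx
    refine ⟨fun i => ?_, fun x hx => ?_⟩
    · rw [hfib hXV]
      have hi : (i : ℕ) ∈ X.image (rankIn X) := by
        rw [image_rankIn, hX, mem_range]
        exact i.2
      obtain ⟨x, hx, hxi⟩ := mem_image.1 hi
      refine card_eq_one.2 ⟨x, ?_⟩
      ext y
      rw [mem_filter, mem_singleton]
      constructor
      · rintro ⟨hy, hyi⟩
        rw [hpos y hy, ← hxi] at hyi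
        exact (rankIn_strictMonoOn X).injOn hy hx hyi
      · rintro rfl
        exact ⟨hx, (hpos y hx).trans hxi⟩
    · exact ⟨⟨gapPos E x, Nat.lt_succ_of_le (gapPos_le E x)⟩, mem_filter.2 ⟨hXV hx, rfl⟩⟩

end Rank

section Cover

open Finset

/-- Degenerate blocks may be dropped from a cover. -/
lemma exactCover_of_parts {V : Finset ℕ} {r : ℕ} {F : Set (Finset ℕ)} {ι : Type*} [Fintype ι]
    (p : ι → Fin r → Finset ℕ) (hsub : ∀ a i, p a i ⊆ V)
    (hdisj : ∀ a i j, i ≠ j → Disjoint (p a i) (p a j))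
    (hedges : ∀ a b, a ≠ b → Disjoint (partsEdges (p a)) (partsEdges (p b)))
    (hF : ⋃ a, partsEdges (p a) = F) : ∃ k ≤ Fintype.card ι, ExactCover V r k F := by
  classical
  let e := Fintype.equivFin {a // ∀ i, (p a i).Nonempty}
  refine ⟨_, Fintype.card_subtype_le _, fun t => ⟨p (e.symm t), (e.symm t).2, hsub _, hdisj _⟩,
    fun s t hst => hedges _ _ fun h => hst (e.symm.injective (Subtype.ext h)), ?_⟩
  rw [← hF]
  ext X
  simp only [Set.mem_iUnion]
  constructor
  · rintro ⟨t, ht⟩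
    exact ⟨_, ht⟩
  · rintro ⟨a, ha⟩
    have hne : ∀ i, (p a i).Nonempty := fun i =>
      (card_pos.1 (by rw [ha.1 i]; exact Nat.one_pos)).mono inter_subset_right
    refine ⟨e ⟨a, hne⟩, ?_⟩
    simp only [Block.edges, Equiv.symm_apply_apply]
    exact ha

lemma ExactCover.union {V : Finset ℕ} {r k l : ℕ} {F G : Set (Finset ℕ)}
    (hF : ExactCover V r k F) (hG : ExactCover V r l G) (hFG : Disjoint F G) :
    ExactCover V r (k + l) (F ∪ G) := by
  obtain ⟨A, hA, rfl⟩ := hF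
  obtain ⟨B, hB, rfl⟩ := hG
  simp only [Set.disjoint_iUnion_left, Set.disjoint_iUnion_right] at hFG
  refine ⟨Fin.append A B, fun i j => ?_, ?_⟩
  · refine Fin.addCases (fun i => ?_) (fun i => ?_) i <;>
      refine Fin.addCases (fun j => ?_) (fun j => ?_) j <;> intro hij <;>
      simp only [Fin.append_left, Fin.append_right]
    · exact hA _ _ fun h => hij (by rw [h])
    · exact hFG j i
    · exact (hFG i j).symm
    · exact hB _ _ fun h => hij (by rw [h])
  · ext X
    simp only [Set.mem_iUnion, Set.mem_union]
    constructor
    · rintro ⟨i, hi⟩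
      revert hi
      refine Fin.addCases (fun i => ?_) (fun i => ?_) i <;>
        simp only [Fin.append_left, Fin.append_right] <;> intro hi
      · exact Or.inl ⟨i, hi⟩
      · exact Or.inr ⟨i, hi⟩
    · rintro (⟨i, hi⟩ | ⟨i, hi⟩)
      · exact ⟨Fin.castAdd l i, by rwa [Fin.append_left]⟩
      · exact ⟨Fin.natAdd k i, by rwa [Fin.append_right]⟩

/-- An exact cover of the complete `r`-graph restricts to smaller vertex sets. -/
lemma ExactCover.restrict {V W : Finset ℕ} {r k : ℕ} (hWV : W ⊆ V)
    (h : ExactCover V r k {X | X ⊆ V ∧ #X = r}) :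
    ∃ l ≤ k, ExactCover W r l {X | X ⊆ W ∧ #X = r} := by
  obtain ⟨B, hB, hU⟩ := h
  have key (t : Fin k) (X : Finset ℕ) :
      X ∈ partsEdges (fun i => (B t).parts i ∩ W) ↔ X ⊆ W ∧ X ∈ (B t).edges := by
    have aux (hX : X ⊆ W) (i : Fin r) : X ∩ ((B t).parts i ∩ W) = X ∩ (B t).parts i := by
      ext x
      simp only [mem_inter]
      exact ⟨fun h => ⟨h.1, h.2.1⟩, fun h => ⟨h.1, h.2, hX h.1⟩⟩
    constructor
    · rintro ⟨h₁, h₂⟩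
      have hX : X ⊆ W := fun x hx => by
        obtain ⟨i, hi⟩ := h₂ x hx
        exact (mem_inter.1 hi).2
      refine ⟨hX, fun i => aux hX i ▸ h₁ i, fun x hx => ?_⟩
      obtain ⟨i, hi⟩ := h₂ x hx
      exact ⟨i, (mem_inter.1 hi).1⟩
    · rintro ⟨hX, h₁, h₂⟩
      refine ⟨fun i => (aux hX i).symm ▸ h₁ i, fun x hx => ?_⟩
      obtain ⟨i, hi⟩ := h₂ x hx
      exact ⟨i, mem_inter.2 ⟨hi, hX hx⟩⟩
  have := exactCover_of_parts (V := W) (F := {X | X ⊆ W ∧ #X = r})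
    (fun t i => (B t).parts i ∩ W) (fun _ _ => inter_subset_right)
    (fun t i j hij => ((B t).disj i j hij).mono inter_subset_left inter_subset_left)
    (fun s t hst => Set.disjoint_left.2 fun X hs ht =>
      Set.disjoint_left.1 (hB s t hst) ((key s X).1 hs).2 ((key t X).1 ht).2) ?_
  · simpa using this
  · ext X
    have hX : (∃ t, X ∈ (B t).edges) ↔ X ⊆ V ∧ #X = r := by
      rw [← Set.mem_iUnion, hU, Set.mem_ofPred_eq]
    simp only [Set.mem_iUnion, key, Set.mem_ofPred_eq, exists_and_left, hX]
    exact ⟨fun h => ⟨h.1, h.2.2⟩, fun h => ⟨h.1, h.1.trans hWV, h.2⟩⟩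

/-- The `(2k+1)`-sets whose set of odd-ranked elements satisfies `P` have an exact cover with one
block for each such set of odd-ranked elements. -/
lemma exactCover_oddRank (V : Finset ℕ) (k : ℕ) (P : Finset ℕ → Prop) [DecidablePred P] :
    ∃ l ≤ #{E ∈ V.powersetCard k | P E},
      ExactCover V (2 * k + 1) l {X | X ⊆ V ∧ #X = 2 * k + 1 ∧ P (oddRank X)} := by
  have hcard (E : {E // E ∈ {E ∈ V.powersetCard k | P E}}) : 2 * k + 1 = 2 * #E.1 + 1 := by
    rw [(mem_powersetCard.1 (mem_filter.1 E.2).1).2]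
  have := exactCover_of_parts (V := V) (F := {X | X ⊆ V ∧ #X = 2 * k + 1 ∧ P (oddRank X)})
    (fun E : {E // E ∈ {E ∈ V.powersetCard k | P E}} => gapParts V E (2 * k + 1))
    (fun _ _ => filter_subset _ _)
    (fun E i j hij => disjoint_left.2 fun x hi hj =>
      hij (Fin.ext ((mem_filter.1 hi).2.symm.trans (mem_filter.1 hj).2)))
    (fun D E hDE => Set.disjoint_left.2 fun X hD hE => hDE (Subtype.ext
      (((mem_partsEdges_gapParts (hcard D)).1 hD).2.2.trans
        ((mem_partsEdges_gapParts (hcard E)).1 hE).2.2.symm))) ?_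
  · rwa [Fintype.card_coe] at this
  · ext X
    simp only [Set.mem_iUnion, Set.mem_ofPred_eq]
    constructor
    · rintro ⟨E, hE⟩
      obtain ⟨h₁, h₂, h₃⟩ := (mem_partsEdges_gapParts (hcard E)).1 hE
      exact ⟨h₁, h₂, h₃ ▸ (mem_filter.1 E.2).2⟩
    · rintro ⟨h₁, h₂, h₃⟩
      have hmem : oddRank X ∈ {E ∈ V.powersetCard k | P E} :=
        mem_filter.2 ⟨mem_powersetCard.2 ⟨(filter_subset _ _).trans h₁,
          by rw [card_oddRank, h₂]; omega⟩, h₃⟩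
      exact ⟨⟨_, hmem⟩, (mem_partsEdges_gapParts (hcard ⟨_, hmem⟩)).2 ⟨h₁, h₂, rfl⟩⟩

lemma choose_sq_le_card_balanced (m d : ℕ) :
    m.choose d ^ 2 ≤ #{E ∈ (range (2 * m)).powersetCard (2 * d) | #{x ∈ E | x < m} = d} := by
  have hinj : Set.InjOn (fun p : Finset ℕ × Finset ℕ => p.1 ∪ p.2)
      ((range m).powersetCard d ×ˢ (Ico m (2 * m)).powersetCard d : Finset _) := by
    rintro ⟨A, B⟩ h ⟨A', B'⟩ h' heq
    simp only [coe_product, Set.mem_prod, mem_coe, mem_powersetCard, subset_iff, mem_range,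
      mem_Ico] at h h'
    simp only [Finset.ext_iff, mem_union] at heq
    simp only [Prod.mk.injEq, Finset.ext_iff]
    constructor <;> intro x <;> grind
  have hc : m.choose d ^ 2 = #((range m).powersetCard d ×ˢ (Ico m (2 * m)).powersetCard d) := by
    rw [card_product, card_powersetCard, card_powersetCard, card_range, Nat.card_Ico, sq]
    congr 2
    omega
  rw [hc, ← card_image_of_injOn hinj]
  refine card_le_card fun E hE => ?_
  obtain ⟨⟨A, B⟩, h, rfl⟩ := mem_image.1 hE
  simp only [mem_product, mem_powersetCard, subset_iff, mem_range, mem_Ico] at h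
  obtain ⟨⟨hA, hAd⟩, hB, hBd⟩ := h
  have hAB : Disjoint A B := disjoint_left.2 fun x h₁ h₂ => by
    have := hA h₁
    have := hB h₂
    omega
  have hlt : (A ∪ B).filter (· < m) = A := by
    ext x
    simp only [mem_filter, mem_union]
    grind
  refine mem_filter.2 ⟨mem_powersetCard.2 ⟨fun x hx => ?_, ?_⟩, by simp only [hlt, hAd]⟩
  · rw [mem_range]
    rcases mem_union.1 hx with h | h
    · have := hA h
      omega
    · exact (hB h).2
  · rw [card_union_of_disjoint hAB, hAd, hBd]
    omega

lemma choose_sq_le (m d : ℕ) : m.choose d ^ 2 ≤ (2 * m).choose (2 * d) := by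
  refine (choose_sq_le_card_balanced m d).trans ((card_filter_le _ _).trans ?_)
  rw [card_powersetCard, card_range]

lemma card_unbalanced_add_choose_sq_le (m d : ℕ) :
    #{E ∈ (range (2 * m)).powersetCard (2 * d) | #{x ∈ E | x < m} ≠ d} + m.choose d ^ 2 ≤
      (2 * m).choose (2 * d) := by
  have h := card_filter_add_card_filter_not (s := (range (2 * m)).powersetCard (2 * d))
    (fun E => #{x ∈ E | x < m} = d)
  rw [card_powersetCard, card_range] at h
  have := choose_sq_le_card_balanced m d
  simp only [ne_eq]
  omega

/-- A cover of the balanced family extends to a cover of the complete `(4d+1)`-graph. -/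
lemma exists_exactCover_of_balanced {m d k : ℕ}
    (h : ExactCover (range (2 * m)) (4 * d + 1) k
      {X | X ⊆ range m ∪ Ico m (2 * m) ∧
        ((#(X ∩ range m) = 2 * d ∧ #(X ∩ Ico m (2 * m)) = 2 * d + 1) ∨
          (#(X ∩ range m) = 2 * d + 1 ∧ #(X ∩ Ico m (2 * m)) = 2 * d))}) :
    ∃ l, l + m.choose d ^ 2 ≤ k + (2 * m).choose (2 * d) ∧
      ExactCover (range (2 * m)) (4 * d + 1) l {X | X ⊆ range (2 * m) ∧ #X = 4 * d + 1} := by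
  obtain ⟨l, hl, hcov⟩ := exactCover_oddRank (range (2 * m)) (2 * d) (fun E => #{x ∈ E | x < m} ≠ d)
  rw [show 2 * (2 * d) + 1 = 4 * d + 1 by ring] at hcov
  have hV : range m ∪ Ico m (2 * m) = range (2 * m) := by
    ext x
    simp only [mem_union, mem_range, mem_Ico]
    omega
  have hbal (X : Finset ℕ) (hX : X ⊆ range (2 * m)) :
      ((#(X ∩ range m) = 2 * d ∧ #(X ∩ Ico m (2 * m)) = 2 * d + 1) ∨
        (#(X ∩ range m) = 2 * d + 1 ∧ #(X ∩ Ico m (2 * m)) = 2 * d)) ↔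
      #X = 4 * d + 1 ∧ #{x ∈ oddRank X | x < m} = d := by
    have hS : #(X ∩ range m) = rankIn X m := by
      rw [rankIn]
      congr 1
      ext x
      simp
    have hsum : #(X ∩ range m) + #(X ∩ Ico m (2 * m)) = #X := by
      rw [← card_union_of_disjoint, ← inter_union_distrib_left, hV, inter_eq_left.2 hX]
      refine disjoint_left.2 fun x h₁ h₂ => ?_
      simp only [mem_inter, mem_range, mem_Ico] at h₁ h₂
      omega
    rw [card_oddRank_filter_lt]
    omega
  have hset := h.union hcov (Set.disjoint_left.2 fun X h₁ h₂ =>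
    h₂.2.2 ((hbal X h₂.1).1 h₁.2).2)
  refine ⟨k + l, ?_, ?_⟩
  · have := card_unbalanced_add_choose_sq_le m d
    omega
  · convert hset using 1
    ext X
    simp only [Set.mem_union, Set.mem_ofPred_eq, hV]
    constructor
    · rintro ⟨hX, hc⟩
      by_cases hd : #{x ∈ oddRank X | x < m} = d
      · exact Or.inl ⟨hX, (hbal X hX).2 ⟨hc, hd⟩⟩
      · exact Or.inr ⟨hX, hc, hd⟩
    · rintro (⟨hX, hb⟩ | ⟨hX, hc, -⟩)
      · exact ⟨hX, ((hbal X hX).1 hb).1⟩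
      · exact ⟨hX, hc⟩

end Cover

section Asymptotics

open Filter Topology

lemma tendsto_choose_div_pow (k : ℕ) :
    Tendsto (fun n : ℕ => (n.choose k : ℝ) / (n : ℝ) ^ k) atTop (𝓝 (1 / k.factorial)) := by
  have h := (isEquivalent_choose k).div
    (Asymptotics.IsEquivalent.refl (u := fun n : ℕ => (n : ℝ) ^ k))
  refine (h.congr_right ?_).tendsto_const
  filter_upwards [eventually_gt_atTop 0] with n hn
  have : (n : ℝ) ^ k ≠ 0 := by positivity
  simp only [Pi.div_apply, Function.const_apply]
  field_simp

lemma tendsto_choose_sq_div_choose (d : ℕ) :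
    Tendsto (fun m : ℕ => (m.choose d : ℝ) ^ 2 / ((2 * m).choose (2 * d) : ℝ)) atTop
      (𝓝 (d.centralBinom / 4 ^ d)) := by
  have h₁ := (tendsto_choose_div_pow d).pow 2
  have h₂ := (tendsto_choose_div_pow (2 * d)).comp (tendsto_id.const_mul_atTop' (r := 2) two_pos)
  have h₃ := (h₁.div h₂ (by positivity)).div_const ((4 : ℝ) ^ d)
  have hlim : (1 / (d.factorial : ℝ)) ^ 2 / (1 / ((2 * d).factorial : ℝ)) / 4 ^ d =
      d.centralBinom / 4 ^ d := by
    have hc : (d.centralBinom : ℝ) * d.factorial * d.factorial = (2 * d).factorial := by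
      have := Nat.choose_mul_factorial_mul_factorial (show d ≤ 2 * d by omega)
      rw [show 2 * d - d = d by omega] at this
      exact_mod_cast this
    rw [← hc]
    field_simp
  rw [hlim] at h₃
  refine h₃.congr' ?_
  filter_upwards [eventually_gt_atTop 0] with m hm
  have hm' : (m : ℝ) ≠ 0 := by positivity
  simp only [Pi.div_apply, Function.comp, id, Nat.cast_mul, Nat.cast_ofNat, mul_pow, pow_mul]
  norm_num
  field_simp
  ring

lemma tendsto_choose_succ_div_choose (k : ℕ) :
    Tendsto (fun n : ℕ => ((n + 1).choose k : ℝ) / (n.choose k : ℝ)) atTop (𝓝 1) := by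
  have h₁ := tendsto_choose_div_pow k
  have h₂ := h₁.comp (tendsto_add_atTop_nat 1)
  have h₃ : Tendsto (fun n : ℕ => (((n : ℝ) + 1) / n) ^ k) atTop (𝓝 1) := by
    have : Tendsto (fun n : ℕ => (1 + 1 / (n : ℝ)) ^ k) atTop (𝓝 ((1 + 0) ^ k)) :=
      (tendsto_const_nhds.add tendsto_one_div_atTop_nhds_zero_nat).pow k
    rw [add_zero, one_pow] at this
    refine this.congr' ?_
    filter_upwards [eventually_gt_atTop 0] with n hn
    have : (n : ℝ) ≠ 0 := by positivity
    field_simp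
  have h₄ := (h₂.div h₁ (by positivity)).mul h₃
  rw [div_self (by positivity), one_mul] at h₄
  refine h₄.congr' ?_
  filter_upwards [eventually_gt_atTop 0] with n hn
  have : (n : ℝ) ≠ 0 := by positivity
  simp only [Pi.div_apply, Function.comp, Nat.cast_add, Nat.cast_one, div_pow]
  field_simp

lemma exp_neg_lt_centralBinom_div {d : ℕ} (hd : 1 ≤ d) :
    1 / Real.exp (((4 * d + 1 : ℕ) : ℝ) / 2) < d.centralBinom / 4 ^ d := by
  have h₁ : (4 : ℝ) ^ d ≤ 2 * d * d.centralBinom := by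
    exact_mod_cast Nat.four_pow_le_two_mul_self_mul_centralBinom d hd
  have h₂ := Real.add_one_le_exp (((4 * d + 1 : ℕ) : ℝ) / 2)
  push_cast at h₂ ⊢
  have hc : (0 : ℝ) < d.centralBinom := by exact_mod_cast d.centralBinom_pos
  rw [div_lt_div_iff₀ (Real.exp_pos _) (by positivity), one_mul, mul_comm]
  refine h₁.trans_lt (mul_lt_mul_of_pos_right ?_ hc)
  linarith

end Asymptotics

section Main

open Finset

lemma f_le_of_exactCover {r n N k : ℕ} (hnN : n ≤ N)
    (h : ExactCover (range N) r k {X | X ⊆ range N ∧ #X = r}) : f r n ≤ k := by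
  obtain ⟨l, hl, hcov⟩ := h.restrict (range_subset_range.2 hnN)
  exact (Nat.sInf_le hcov).trans hl

end Main

theorem odd_from_balanced_cover (d : ℕ) (hd : 1 ≤ d) (r : ℕ) (hr : r = 4 * d + 1)
    (α : ℝ) (hα0 : 0 ≤ α) (hα1 : α < 1)
    (hcov : ∀ ε : ℝ, 0 < ε → ∃ N : ℕ, ∀ n : ℕ, Even n → N ≤ n →
      ∀ S T : Finset ℕ, Disjoint S T → S ∪ T = Finset.range n →
        S.card = n / 2 → T.card = n / 2 →
        ∃ k : ℕ,
          ExactCover (Finset.range n) r k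
            {X | X ⊆ S ∪ T ∧
              (((X ∩ S).card = 2 * d ∧ (X ∩ T).card = 2 * d + 1) ∨
               ((X ∩ S).card = 2 * d + 1 ∧ (X ∩ T).card = 2 * d))} ∧
          (k : ℝ) ≤ α * (1 + ε) * ((n / 2).choose d : ℝ) ^ 2) :
    ∀ ε : ℝ, 0 < ε → ∃ M : ℕ, ∀ n : ℕ, M ≤ n →
      (f r n : ℝ) ≤ (1 - (1 - α) / Real.exp ((r : ℝ) / 2)) * (1 + ε) * (n.choose (2 * d)) := by
  subst hr
  intro ε hε
  set q : ℝ := 1 / Real.exp (((4 * d + 1 : ℕ) : ℝ) / 2) with hq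
  have hq1 : q < 1 := by
    rw [hq, div_lt_one (Real.exp_pos _)]
    exact Real.one_lt_exp_iff.2 (by positivity)
  set c : ℝ := 1 - (1 - α) / Real.exp (((4 * d + 1 : ℕ) : ℝ) / 2) with hc_def
  have hc : c = 1 - (1 - α) * q := by rw [hc_def, hq]; ring
  have hc0 : 0 < c := by
    rw [hc]
    nlinarith [show 0 < q by positivity]
  obtain ⟨N, hN⟩ := hcov (c * ε / 2) (by positivity)
  obtain ⟨M₁, hM₁⟩ := Filter.eventually_atTop.1
    ((tendsto_choose_sq_div_choose d).eventually_const_lt (exp_neg_lt_centralBinom_div hd))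
  obtain ⟨M₂, hM₂⟩ := Filter.eventually_atTop.1
    ((tendsto_choose_succ_div_choose (2 * d)).eventually_lt_const
      (show 1 < (1 + ε) / (1 + ε / 2) by rw [lt_div_iff₀ (by positivity)]; linarith))
  refine ⟨N + 2 * M₁ + M₂ + 2 * d, fun n hn => ?_⟩
  obtain ⟨m, hnm, hmn⟩ : ∃ m, n ≤ 2 * m ∧ 2 * m ≤ n + 1 := ⟨(n + 1) / 2, by omega, by omega⟩
  have hhalf : 2 * m / 2 = m := by omega
  obtain ⟨k, hk, hkle⟩ := hN (2 * m) ⟨m, by ring⟩ (by omega)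
    (Finset.range m) (Finset.Ico m (2 * m))
    (Finset.disjoint_left.2 fun x h₁ h₂ => by
      simp only [Finset.mem_range, Finset.mem_Ico] at h₁ h₂
      omega)
    (by
      ext x
      simp only [Finset.mem_union, Finset.mem_range, Finset.mem_Ico]
      omega)
    (by simp [hhalf])
    (by
      rw [Nat.card_Ico, hhalf]
      omega)
  rw [hhalf] at hkle
  obtain ⟨l, hl, hlcov⟩ := exists_exactCover_of_balanced hk
  have hfl : (f (4 * d + 1) n : ℝ) ≤ l := by exact_mod_cast f_le_of_exactCover hnm hlcov
  have hl' : (l : ℝ) + (m.choose d : ℝ) ^ 2 ≤ k + (2 * m).choose (2 * d) := by exact_mod_cast hl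
  have hsq : (m.choose d : ℝ) ^ 2 ≤ (2 * m).choose (2 * d) := by exact_mod_cast choose_sq_le m d
  have hmono : ((2 * m).choose (2 * d) : ℝ) ≤ (n + 1).choose (2 * d) := by
    exact_mod_cast Nat.choose_le_choose _ hmn
  have hpos : (0 : ℝ) < (2 * m).choose (2 * d) := by
    exact_mod_cast Nat.choose_pos (by omega)
  have hpos' : (0 : ℝ) < n.choose (2 * d) := by exact_mod_cast Nat.choose_pos (by omega)
  have hlow := hM₁ m (by omega)
  rw [← hq, lt_div_iff₀ hpos] at hlow
  have hup := hM₂ n (by omega)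
  rw [div_lt_div_iff₀ hpos' (by positivity)] at hup
  set A : ℝ := ((2 * m).choose (2 * d) : ℝ)
  set s : ℝ := (m.choose d : ℝ) ^ 2
  have hlA : (l : ℝ) ≤ c * (1 + ε / 2) * A := by
    have h₁ : (1 - α) * (q * A) ≤ (1 - α) * s := by gcongr
    have h₂ : α * (c * ε / 2) * s ≤ 1 * (c * ε / 2) * A := by gcongr
    rw [hc] at h₂ hkle ⊢
    linarith
  calc (f (4 * d + 1) n : ℝ) ≤ c * ((1 + ε / 2) * A) := by linarith
    _ ≤ c * ((1 + ε) * n.choose (2 * d)) := by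
      refine mul_le_mul_of_nonneg_left ?_ hc0.le
      calc (1 + ε / 2) * A ≤ (1 + ε / 2) * (n + 1).choose (2 * d) := by gcongr
        _ ≤ _ := by linarith
    _ = c * (1 + ε) * n.choose (2 * d) := by ring
end

section
/- For every ε > 0 there exists N such that for all even n ≥ N, 2 · f_62(n/2) · f_63(n/2) ≤ 0.981 · (1 + ε) · C(n/2, 31)², where C(n, k) denotes the binomial coefficient. -/
namespace GrahamPollak

/-- The edges of the box with list of parts `l`. -/
def boxEdges (l : List (Finset ℕ)) : Set (Finset ℕ) :=
  {X | (∀ P ∈ l, (X ∩ P).card = 1) ∧ ∀ x ∈ X, ∃ P ∈ l, x ∈ P}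

/-- A list of `r` pairwise disjoint (possibly empty) parts contained in `A`. -/
structure IsBox (A : Finset ℕ) (r : ℕ) (l : List (Finset ℕ)) : Prop where
  length_eq : l.length = r
  subset : ∀ P ∈ l, P ⊆ A
  pairwise : l.Pairwise Disjoint

/-- At most `k` boxes with `r` parts inside `A` partition the family of all `X ⊆ A`
satisfying `F`. -/
def Cov (A : Finset ℕ) (r k : ℕ) (F : Finset ℕ → Prop) : Prop :=
  ∃ (ι : Type) (_ : Fintype ι) (P : ι → List (Finset ℕ)), Fintype.card ι ≤ k ∧
    (∀ a, IsBox A r (P a)) ∧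
    ∀ X ⊆ A, (F X → ∃ a, X ∈ boxEdges (P a)) ∧ (∀ a, X ∈ boxEdges (P a) → F X) ∧
      ∀ a b, X ∈ boxEdges (P a) → X ∈ boxEdges (P b) → a = b

lemma subset_of_mem_boxEdges {A X : Finset ℕ} {r : ℕ} {l : List (Finset ℕ)} (hl : IsBox A r l)
    (hX : X ∈ boxEdges l) : X ⊆ A := fun x hx => by
  obtain ⟨P, hP, hxP⟩ := hX.2 x hx
  exact hl.subset P hP hxP

lemma IsBox.mono {A A' : Finset ℕ} {r : ℕ} {l : List (Finset ℕ)} (hl : IsBox A r l)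
    (h : A ⊆ A') : IsBox A' r l :=
  ⟨hl.length_eq, fun P hP => (hl.subset P hP).trans h, hl.pairwise⟩

lemma mem_boxEdges_append {A B X : Finset ℕ} {r s : ℕ} {l m : List (Finset ℕ)}
    (hl : IsBox A r l) (hm : IsBox B s m) (hAB : Disjoint A B) (hX : X ⊆ A ∪ B) :
    X ∈ boxEdges (l ++ m) ↔ X ∩ A ∈ boxEdges l ∧ X ∩ B ∈ boxEdges m := by
  have hA : ∀ P ∈ l, X ∩ A ∩ P = X ∩ P := fun P hP => by
    rw [Finset.inter_assoc, Finset.inter_eq_right.2 (hl.subset P hP)]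
  have hB : ∀ P ∈ m, X ∩ B ∩ P = X ∩ P := fun P hP => by
    rw [Finset.inter_assoc, Finset.inter_eq_right.2 (hm.subset P hP)]
  constructor
  · rintro ⟨h1, h2⟩
    refine ⟨⟨fun P hP => ?_, fun x hx => ?_⟩, ⟨fun P hP => ?_, fun x hx => ?_⟩⟩
    · rw [hA P hP]; exact h1 P (by simp [hP])
    · rw [Finset.mem_inter] at hx
      obtain ⟨P, hP, hxP⟩ := h2 x hx.1
      rcases List.mem_append.1 hP with hP | hP
      · exact ⟨P, hP, hxP⟩
      · exact absurd (hm.subset P hP hxP) (Finset.disjoint_left.1 hAB hx.2)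
    · rw [hB P hP]; exact h1 P (by simp [hP])
    · rw [Finset.mem_inter] at hx
      obtain ⟨P, hP, hxP⟩ := h2 x hx.1
      rcases List.mem_append.1 hP with hP | hP
      · exact absurd hx.2 (Finset.disjoint_left.1 hAB (hl.subset P hP hxP))
      · exact ⟨P, hP, hxP⟩
  · rintro ⟨⟨h1, h2⟩, ⟨h3, h4⟩⟩
    refine ⟨fun P hP => ?_, fun x hx => ?_⟩
    · rcases List.mem_append.1 hP with hP | hP
      · rw [← hA P hP]; exact h1 P hP
      · rw [← hB P hP]; exact h3 P hP
    · rcases Finset.mem_union.1 (hX hx) with hxA | hxB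
      · obtain ⟨P, hP, h⟩ := h2 x (Finset.mem_inter.2 ⟨hx, hxA⟩)
        exact ⟨P, List.mem_append.2 (Or.inl hP), h⟩
      · obtain ⟨P, hP, h⟩ := h4 x (Finset.mem_inter.2 ⟨hx, hxB⟩)
        exact ⟨P, List.mem_append.2 (Or.inr hP), h⟩

lemma IsBox.append {A B : Finset ℕ} {r s : ℕ} {l m : List (Finset ℕ)}
    (hl : IsBox A r l) (hm : IsBox B s m) (hAB : Disjoint A B) :
    IsBox (A ∪ B) (r + s) (l ++ m) := by
  refine ⟨by simp [hl.length_eq, hm.length_eq], fun P hP => ?_, ?_⟩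
  · rcases List.mem_append.1 hP with hP | hP
    · exact (hl.subset P hP).trans Finset.subset_union_left
    · exact (hm.subset P hP).trans Finset.subset_union_right
  · exact List.pairwise_append.2 ⟨hl.pairwise, hm.pairwise, fun P hP Q hQ =>
      Finset.disjoint_of_subset_left (hl.subset P hP)
        (Finset.disjoint_of_subset_right (hm.subset Q hQ) hAB)⟩

lemma Cov.prod {A B : Finset ℕ} {r s k m : ℕ} {F G : Finset ℕ → Prop}
    (hF : Cov A r k F) (hG : Cov B s m G) (hAB : Disjoint A B) :
    Cov (A ∪ B) (r + s) (k * m) (fun X => F (X ∩ A) ∧ G (X ∩ B)) := by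
  obtain ⟨ι, _, P, hk, hP, h⟩ := hF
  obtain ⟨κ, _, Q, hm, hQ, h'⟩ := hG
  refine ⟨ι × κ, inferInstance, fun a => P a.1 ++ Q a.2, ?_,
    fun a => (hP a.1).append (hQ a.2) hAB, fun X hX => ?_⟩
  · rw [Fintype.card_prod]; exact Nat.mul_le_mul hk hm
  · obtain ⟨h1, h2, h3⟩ := h (X ∩ A) Finset.inter_subset_right
    obtain ⟨h1', h2', h3'⟩ := h' (X ∩ B) Finset.inter_subset_right
    have key : ∀ a : ι × κ, X ∈ boxEdges (P a.1 ++ Q a.2) ↔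
        X ∩ A ∈ boxEdges (P a.1) ∧ X ∩ B ∈ boxEdges (Q a.2) :=
      fun a => mem_boxEdges_append (hP a.1) (hQ a.2) hAB hX
    refine ⟨fun ⟨hf, hg⟩ => ?_, fun a ha => ?_, fun a b ha hb => ?_⟩
    · obtain ⟨a, ha⟩ := h1 hf
      obtain ⟨b, hb⟩ := h1' hg
      exact ⟨(a, b), (key (a, b)).2 ⟨ha, hb⟩⟩
    · exact ⟨h2 _ ((key a).1 ha).1, h2' _ ((key a).1 ha).2⟩
    · exact Prod.ext (h3 _ _ ((key a).1 ha).1 ((key b).1 hb).1)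
        (h3' _ _ ((key a).1 ha).2 ((key b).1 hb).2)

lemma Cov.iUnion {ι : Type} [Fintype ι] {A : Finset ℕ} {r : ℕ} {F : Finset ℕ → Prop}
    (B : ι → Finset ℕ) (k : ι → ℕ) (G : ι → Finset ℕ → Prop) (hB : ∀ i, B i ⊆ A)
    (hG : ∀ i, Cov (B i) r (k i) (G i))
    (hF : ∀ X ⊆ A, F X ↔ ∃ i, X ⊆ B i ∧ G i X)
    (hu : ∀ X ⊆ A, ∀ i j, X ⊆ B i → X ⊆ B j → G i X → G j X → i = j) :
    Cov A r (∑ i, k i) F := by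
  choose κ fκ P hk hP h using hG
  refine ⟨Σ i, κ i, inferInstance, fun a => P a.1 a.2, ?_, fun a => (hP a.1 a.2).mono (hB a.1),
    fun X hX => ⟨fun hf => ?_, fun a ha => ?_, ?_⟩⟩
  · rw [Fintype.card_sigma]
    exact Finset.sum_le_sum fun i _ => hk i
  · obtain ⟨i, hXi, hGi⟩ := (hF X hX).1 hf
    obtain ⟨a, ha⟩ := (h i X hXi).1 hGi
    exact ⟨⟨i, a⟩, ha⟩
  · have hs := subset_of_mem_boxEdges (hP a.1 a.2) ha
    exact (hF X hX).2 ⟨a.1, hs, (h a.1 X hs).2.1 a.2 ha⟩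
  · rintro ⟨i, a⟩ ⟨j, b⟩ ha hb
    have hs := subset_of_mem_boxEdges (hP i a) ha
    have hs' := subset_of_mem_boxEdges (hP j b) hb
    obtain rfl : i = j := hu X hX i j hs hs' ((h i X hs).2.1 a ha) ((h j X hs').2.1 b hb)
    obtain rfl : a = b := (h i X hs).2.2 a b ha hb
    rfl

lemma Cov.congr {A : Finset ℕ} {r k : ℕ} {F G : Finset ℕ → Prop} (hF : Cov A r k F)
    (h : ∀ X ⊆ A, F X ↔ G X) : Cov A r k G := by
  obtain ⟨ι, i, P, hk, hP, h'⟩ := hF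
  exact ⟨ι, i, P, hk, hP, fun X hX => by rw [← h X hX]; simpa only [h X hX] using h' X hX⟩

lemma Cov.mono {A : Finset ℕ} {r k m : ℕ} {F : Finset ℕ → Prop} (hF : Cov A r k F)
    (h : k ≤ m) : Cov A r m F := by
  obtain ⟨ι, i, P, hk, hP, h'⟩ := hF
  exact ⟨ι, i, P, hk.trans h, hP, h'⟩

lemma Cov.restrict {A B : Finset ℕ} {r k : ℕ} {F : Finset ℕ → Prop} (hF : Cov A r k F)
    (hBA : B ⊆ A) : Cov B r k F := by
  obtain ⟨ι, i, P, hk, hP, h⟩ := hF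
  refine ⟨ι, i, fun a => (P a).map (· ∩ B), hk, fun a => ⟨by simp [(hP a).length_eq], ?_, ?_⟩,
    fun X hX => ?_⟩
  · simp only [List.mem_map]
    rintro _ ⟨Q, -, rfl⟩
    exact Finset.inter_subset_right
  · refine List.Pairwise.map _ (fun P Q h => ?_) (hP a).pairwise
    exact Finset.disjoint_of_subset_left Finset.inter_subset_left
      (Finset.disjoint_of_subset_right Finset.inter_subset_left h)
  · have key : ∀ a, X ∈ boxEdges ((P a).map (· ∩ B)) ↔ X ∈ boxEdges (P a) := fun a => by
      have e : ∀ Q : Finset ℕ, X ∩ (Q ∩ B) = X ∩ Q := fun Q => by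
        ext x; simp only [Finset.mem_inter]
        exact ⟨fun h => ⟨h.1, h.2.1⟩, fun h => ⟨h.1, h.2, hX h.1⟩⟩
      simp only [boxEdges, Set.mem_ofPred_eq, List.mem_map, forall_exists_index, and_imp,
        forall_apply_eq_imp_iff₂, exists_exists_and_eq_and, e, Finset.mem_inter]
      refine and_congr_right fun _ => forall₂_congr fun x hx => exists_congr fun Q => ?_
      simp [hX hx]
    simpa only [key] using h X (hX.trans hBA)

lemma cov_nil (F : Finset ℕ → Prop) (hF : F ∅) : Cov ∅ 0 1 F := by
  refine ⟨Unit, inferInstance, fun _ => [], by simp, fun _ => ⟨rfl, by simp, by simp⟩,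
    fun X hX => ?_⟩
  obtain rfl : X = ∅ := Finset.subset_empty.1 hX
  simp [boxEdges, hF]

lemma cov_card_one (A : Finset ℕ) : Cov A 1 1 (fun X => X.card = 1) := by
  refine ⟨Unit, inferInstance, fun _ => [A], by simp, fun _ => ⟨rfl, by simp, by simp⟩,
    fun X hX => ?_⟩
  simp only [boxEdges, List.mem_singleton, forall_eq, exists_eq_left, Set.mem_ofPred_eq,
    Finset.inter_eq_left.2 hX]
  exact ⟨fun h => ⟨(), h, hX⟩, fun _ h => h.1, fun _ _ _ _ => trivial⟩

lemma f_le_of_cov {n r k : ℕ} (h : Cov (Finset.range n) r k (fun X => X.card = r)) :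
    f r n ≤ k := by
  obtain ⟨ι, _, P, hk, hP, h⟩ := h
  classical
  let κ := {a : ι // ∀ Q ∈ P a, Q.Nonempty}
  have hκ : Fintype.card κ ≤ k := (Fintype.card_subtype_le _).trans hk
  refine (Nat.sInf_le ?_).trans hκ
  let e := (Fintype.equivFin κ).symm
  have hlen : ∀ a : κ, (P a.1).length = r := fun a => (hP a.1).length_eq
  let B : κ → Block (Finset.range n) r := fun a =>
    { parts := fun i => (P a.1).get (i.cast (hlen a).symm)
      nonempty := fun i => a.2 _ (List.get_mem _ _)
      subset := fun i => (hP a.1).subset _ (List.get_mem _ _)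
      disj := fun i j hij => by
        have := List.pairwise_iff_get.1 (hP a.1).pairwise
        rcases lt_or_gt_of_ne hij with h | h
        · exact this _ _ (by simpa using h)
        · exact (this _ _ (by simpa using h)).symm }
  have hB : ∀ a, (B a).edges = boxEdges (P a.1) := fun a => by
    have hf : ∀ p : Finset ℕ → Prop, (∀ Q ∈ P a.1, p Q) ↔ ∀ i, p ((B a).parts i) := fun p => by
      rw [List.forall_mem_iff_get]
      exact ⟨fun h i => h _, fun h i => by simpa [B] using h (i.cast (hlen a))⟩
    ext X
    have h1 := hf (fun Q => (X ∩ Q).card = 1)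
    have h2 : ∀ x, (∃ Q ∈ P a.1, x ∈ Q) ↔ ∃ i, x ∈ (B a).parts i := fun x => by
      have := hf (fun Q => x ∉ Q)
      rw [← not_iff_not]
      push Not
      exact this
    simp only [Block.edges, boxEdges, Set.mem_ofPred_eq, h1, h2]
  refine ⟨fun i => B (e i), fun i j hij => ?_, ?_⟩
  · rw [hB, hB, Set.disjoint_left]
    intro X hX hX'
    have := (h X (subset_of_mem_boxEdges (hP _) hX)).2.2 _ _ hX hX'
    exact hij (e.injective (Subtype.ext this))
  · ext X
    simp only [Set.mem_iUnion, hB, Set.mem_ofPred_eq]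
    constructor
    · rintro ⟨i, hi⟩
      have hs := subset_of_mem_boxEdges (hP _) hi
      exact ⟨hs, (h X hs).2.1 _ hi⟩
    · rintro ⟨hs, hc⟩
      obtain ⟨a, ha⟩ := (h X hs).1 hc
      have hne : ∀ Q ∈ P a, Q.Nonempty := fun Q hQ => by
        have := ha.1 Q hQ
        rw [Finset.nonempty_iff_ne_empty]
        rintro rfl
        simp at this
      exact ⟨e.symm ⟨a, hne⟩, by simpa using ha⟩

lemma sum_fin_choose (n k : ℕ) : ∑ j : Fin n, (j : ℕ).choose k = n.choose (k + 1) := by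
  rw [Fin.sum_univ_eq_sum_range (fun j => j.choose k)]
  induction n with
  | zero => simp
  | succ n ih => rw [Finset.sum_range_succ, ih, Nat.choose_succ_succ, add_comm]

lemma exists_mem_card_inter_Ico {a b s : ℕ} {X : Finset ℕ} (hX : X ⊆ Finset.Ico a b)
    (hs : s < X.card) : ∃ y ∈ X, (X ∩ Finset.Ico a y).card = s := by
  have hex : ∃ y, s < (X ∩ Finset.Ico a (y + 1)).card :=
    ⟨b, hs.trans_le (Finset.card_le_card fun x hx => Finset.mem_inter.2 ⟨hx, by
      have := Finset.mem_Ico.1 (hX hx)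
      exact Finset.mem_Ico.2 ⟨this.1, by omega⟩⟩)⟩
  classical
  have h1 := Nat.find_spec hex
  set y := Nat.find hex with hy
  have h2 : (X ∩ Finset.Ico a y).card ≤ s := by
    rcases Nat.eq_zero_or_pos y with h0 | h0
    · rw [h0]; simp
    · have := Nat.find_min hex (m := y - 1) (by omega)
      rw [Nat.sub_add_cancel h0] at this
      omega
  have h3 : X ∩ Finset.Ico a (y + 1) ⊆ insert y (X ∩ Finset.Ico a y) := fun x hx => by
    simp only [Finset.mem_inter, Finset.mem_Ico, Finset.mem_insert] at hx ⊢
    by_cases h : x = y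
    · exact Or.inl h
    · exact Or.inr ⟨hx.1, hx.2.1, by omega⟩
  have h4 := (Finset.card_le_card h3).trans (Finset.card_insert_le _ _)
  refine ⟨y, ?_, by omega⟩
  by_contra hyX
  have h5 : X ∩ Finset.Ico a (y + 1) ⊆ X ∩ Finset.Ico a y := fun x hx => by
    rcases Finset.mem_insert.1 (h3 hx) with rfl | h
    · exact absurd (Finset.mem_inter.1 hx).1 hyX
    · exact h
  have := Finset.card_le_card h5
  omega

lemma card_inter_Ico_lt {a y z : ℕ} {X : Finset ℕ} (hy : y ∈ X) (hay : a ≤ y) (hyz : y < z) :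
    (X ∩ Finset.Ico a y).card < (X ∩ Finset.Ico a z).card := by
  refine Finset.card_lt_card ((Finset.ssubset_iff_of_subset fun x hx => ?_).2 ⟨y, ?_, ?_⟩)
  · simp only [Finset.mem_inter, Finset.mem_Ico] at hx ⊢
    exact ⟨hx.1, hx.2.1, by omega⟩
  · simp [hy, hay, hyz]
  · simp

lemma card_eq_card_inter_Ico {a b y : ℕ} {X : Finset ℕ} (hX : X ⊆ Finset.Ico a b) (hy : y ∈ X) :
    X.card = (X ∩ Finset.Ico a y).card + 1 + (X ∩ Finset.Ico (y + 1) b).card := by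
  have h : X = insert y (X ∩ Finset.Ico a y) ∪ X ∩ Finset.Ico (y + 1) b := by
    ext x
    simp only [Finset.mem_union, Finset.mem_insert, Finset.mem_inter, Finset.mem_Ico]
    constructor
    · intro hx
      have := Finset.mem_Ico.1 (hX hx)
      rcases lt_trichotomy x y with h | h | h
      · exact Or.inl (Or.inr ⟨hx, this.1, h⟩)
      · exact Or.inl (Or.inl h)
      · exact Or.inr ⟨hx, h, this.2⟩
    · rintro ((rfl | h) | h)
      · exact hy
      · exact h.1
      · exact h.1
  conv_lhs => rw [h]
  rw [Finset.card_union_of_disjoint, Finset.card_insert_of_notMem]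
  · simp
  · rw [Finset.disjoint_left]
    intro x hx hx'
    simp only [Finset.mem_insert, Finset.mem_inter, Finset.mem_Ico] at hx hx'
    omega

/-- Splitting according to the element of `X` that has exactly `s` elements of `X` below it. -/
lemma cov_split {k s t m : ℕ} (hs : ∀ a b, Cov (Finset.Ico a b) s ((b - a).choose k)
      (fun X => X.card = s))
    (ht : ∀ a b, Cov (Finset.Ico a b) t 1 (fun X => X.card = t)) (hm : s + 1 + t = m)
    (a b : ℕ) : Cov (Finset.Ico a b) m ((b - a).choose (k + 1)) (fun X => X.card = m) := by
  rw [← sum_fin_choose]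
  have hI : ∀ j : Fin (b - a), Disjoint (Finset.Ico a (a + j)) {a + (j : ℕ)} := fun j => by simp
  have hJ : ∀ j : Fin (b - a), Disjoint (Finset.Ico a (a + j) ∪ {a + (j : ℕ)})
      (Finset.Ico (a + j + 1) b) := fun j => by
    rw [Finset.disjoint_left]
    intro x hx hx'
    simp only [Finset.mem_union, Finset.mem_singleton, Finset.mem_Ico] at hx hx'
    omega
  have hu : ∀ j : Fin (b - a), Finset.Ico a (a + j) ∪ {a + (j : ℕ)} ∪ Finset.Ico (a + j + 1) b
      = Finset.Ico a b := fun j => by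
    ext x
    have := j.2
    simp only [Finset.mem_union, Finset.mem_singleton, Finset.mem_Ico]
    omega
  have hG : ∀ j : Fin (b - a), Cov (Finset.Ico a b) m ((j : ℕ).choose k)
      (fun X => (X ∩ Finset.Ico a (a + j)).card = s ∧ a + (j : ℕ) ∈ X ∧
        (X ∩ Finset.Ico (a + j + 1) b).card = t) := fun j => by
    have := ((hs a (a + j)).prod (cov_card_one {a + (j : ℕ)}) (hI j)).prod
      (ht (a + j + 1) b) (hJ j)
    rw [hu, hm, mul_one, mul_one, Nat.add_sub_cancel_left] at this
    refine this.congr fun X hX => ?_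
    have e : ∀ C : Finset ℕ, C ⊆ Finset.Ico a (a + j) ∪ {a + (j : ℕ)} →
        X ∩ (Finset.Ico a (a + j) ∪ {a + (j : ℕ)}) ∩ C = X ∩ C := fun C hC => by
      rw [Finset.inter_assoc, Finset.inter_eq_right.2 hC]
    rw [e _ Finset.subset_union_left, e _ Finset.subset_union_right, and_assoc]
    refine and_congr_right fun _ => and_congr_left fun _ => ?_
    by_cases h : a + (j : ℕ) ∈ X <;> simp [h]
  refine Cov.iUnion (fun _ => Finset.Ico a b) _ _ (fun _ => subset_rfl) hG (fun X hX => ?_)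
    fun X hX i j _ _ hi hj => ?_
  · constructor
    · intro hc
      obtain ⟨y, hy, hys⟩ := exists_mem_card_inter_Ico hX (s := s) (by omega)
      have hy' := Finset.mem_Ico.1 (hX hy)
      have := card_eq_card_inter_Ico hX hy
      refine ⟨⟨y - a, by omega⟩, hX, ?_⟩
      simp only [Nat.add_sub_cancel' hy'.1]
      exact ⟨hys, hy, by omega⟩
    · rintro ⟨j, -, h1, h2, h3⟩
      have := card_eq_card_inter_Ico hX h2
      omega
  · rcases lt_trichotomy i j with h | h | h
    · have := card_inter_Ico_lt hi.2.1 (Nat.le_add_right _ _)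
        (Nat.add_lt_add_left (Fin.lt_def.1 h) a)
      omega
    · exact h
    · have := card_inter_Ico_lt hj.2.1 (Nat.le_add_right _ _)
        (Nat.add_lt_add_left (Fin.lt_def.1 h) a)
      omega

lemma cov_card_zero (A : Finset ℕ) : Cov A 0 1 (fun X => X.card = 0) := by
  refine ⟨Unit, inferInstance, fun _ => [], by simp, fun _ => ⟨rfl, by simp, by simp⟩,
    fun X _ => ?_⟩
  simp [boxEdges, Finset.eq_empty_iff_forall_notMem]

lemma cov_card_odd (k a b : ℕ) :
    Cov (Finset.Ico a b) (2 * k + 1) ((b - a).choose k) (fun X => X.card = 2 * k + 1) := by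
  induction k generalizing a b with
  | zero => simpa using cov_card_one (Finset.Ico a b)
  | succ k ih => exact cov_split ih (fun a b => cov_card_one _) (by ring) a b

lemma cov_card_even (k a b : ℕ) :
    Cov (Finset.Ico a b) (2 * k) ((b - a).choose k) (fun X => X.card = 2 * k) := by
  cases k with
  | zero => simpa using cov_card_zero (Finset.Ico a b)
  | succ k => exact cov_split (cov_card_odd k) (fun a b => cov_card_zero _) (by ring) a b

lemma cov_card (r a b : ℕ) :
    Cov (Finset.Ico a b) r ((b - a).choose (r / 2)) (fun X => X.card = r) := by
  rcases Nat.even_or_odd' r with ⟨k, rfl | rfl⟩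
  · simpa using cov_card_even k a b
  · rw [show (2 * k + 1) / 2 = k by omega]
    exact cov_card_odd k a b

lemma f_le_choose (r n : ℕ) : f r n ≤ n.choose (r / 2) := by
  apply f_le_of_cov
  have := cov_card r 0 n
  rwa [← Finset.range_eq_Ico] at this

/-- `{i, j}` is an edge of the complete bipartite graph with parts `p.1` and `p.2`. -/
def Separates (p : Finset ℕ × Finset ℕ) (i j : ℕ) : Prop :=
  (i ∈ p.1 ∧ j ∈ p.2) ∨ (i ∈ p.2 ∧ j ∈ p.1)

instance (p : Finset ℕ × Finset ℕ) (i j : ℕ) : Decidable (Separates p i j) :=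
  inferInstanceAs (Decidable (_ ∨ _))

/-- Fourteen products of complete bipartite graphs partitioning `E(K₄) × E(K₆)`. -/
def products : Fin 14 → (Finset ℕ × Finset ℕ) × (Finset ℕ × Finset ℕ) :=
  ![(({0, 1}, {2, 3}), ({1}, {2, 3})),
    (({0, 1}, {2, 3}), ({0}, {3, 5})),
    (({0, 2}, {1, 3}), ({2}, {4, 5})),
    (({0, 2}, {1, 3}), ({0, 4}, {1})),
    (({0, 3}, {1, 2}), ({2, 4, 5}, {3})),
    (({0, 3}, {1, 2}), ({0, 5}, {4})),
    (({0}, {1}), ({0, 1}, {2, 3, 5})),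
    (({2}, {3}), ({0, 1}, {2, 3, 5})),
    (({0}, {2}), ({0, 4, 5}, {1, 2})),
    (({1}, {3}), ({0, 4, 5}, {1, 2})),
    (({0}, {3}), ({1, 3, 4}, {5})),
    (({0}, {3}), ({0, 3}, {2, 4})),
    (({1}, {2}), ({1, 3, 4}, {5})),
    (({1}, {2}), ({0, 3}, {2, 4}))]

set_option maxRecDepth 100000 in
set_option maxHeartbeats 4000000 in
lemma products_exists : ∀ i j : Fin 4, ∀ k l : Fin 6, i ≠ j → k ≠ l →
    ∃ t, Separates (products t).1 i j ∧ Separates (products t).2 k l := by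
  decide

set_option maxRecDepth 100000 in
set_option maxHeartbeats 4000000 in
lemma products_unique : ∀ t t' : Fin 14, t ≠ t' →
    (∀ i ∈ (products t).1.1, ∀ j ∈ (products t).1.2, ¬ Separates (products t').1 i j) ∨
    (∀ i ∈ (products t).2.1, ∀ j ∈ (products t).2.2, ¬ Separates (products t').2 i j) := by
  decide

lemma products_disjoint : ∀ t : Fin 14, Disjoint (products t).1.1 (products t).1.2 ∧
    Disjoint (products t).2.1 (products t).2.2 := by
  decide

lemma products_lt : ∀ t : Fin 14, (∀ i ∈ (products t).1.1 ∪ (products t).1.2, i < 4) ∧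
    ∀ i ∈ (products t).2.1 ∪ (products t).2.2, i < 6 := by
  decide

lemma Separates.symm {p : Finset ℕ × Finset ℕ} {i j : ℕ} (h : Separates p i j) :
    Separates p j i := by
  rcases h with h | h
  · exact Or.inr ⟨h.2, h.1⟩
  · exact Or.inl ⟨h.2, h.1⟩

lemma eq_of_separates {i j k l : ℕ} {t t' : Fin 14} (h₁ : Separates (products t).1 i j)
    (h₂ : Separates (products t).2 k l) (h₁' : Separates (products t').1 i j)
    (h₂' : Separates (products t').2 k l) : t = t' := by
  by_contra hne
  rcases products_unique t t' hne with h | h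
  · rcases h₁ with h₁ | h₁
    · exact h i h₁.1 j h₁.2 h₁'
    · exact h j h₁.2 i h₁.1 h₁'.symm
  · rcases h₂ with h₂ | h₂
    · exact h k h₂.1 l h₂.2 h₂'
    · exact h l h₂.2 k h₂.1 h₂'.symm

/-- The class of `x` in the `j`-th of the blown-up copies of `K_{m+1}` that partition the pairs of
natural numbers: the numbers `m * j, …, m * j + m - 1` are singletons, all larger numbers
form the class `m`, and the value `m + 1` means that `x` does not belong to the copy. -/
def label (m j x : ℕ) : ℕ := if x < m * j then m + 1 else min (x - m * j) m

lemma label_three {j x y : ℕ} (h : x < y) :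
    label 3 j x < 4 ∧ label 3 j y < 4 ∧ label 3 j x ≠ label 3 j y ↔ j = x / 3 := by
  unfold label
  split_ifs <;> omega

lemma label_five {j x y : ℕ} (h : x < y) :
    label 5 j x < 6 ∧ label 5 j y < 6 ∧ label 5 j x ≠ label 5 j y ↔ j = x / 5 := by
  unfold label
  split_ifs <;> omega

lemma mem_boxEdges_pair {P Q : Finset ℕ} {x y : ℕ} (hPQ : Disjoint P Q) (hxy : x ≠ y) :
    {x, y} ∈ boxEdges [P, Q] ↔ (x ∈ P ∧ y ∈ Q) ∨ (x ∈ Q ∧ y ∈ P) := by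
  have hd := Finset.disjoint_left.1 hPQ
  simp only [boxEdges, List.mem_cons, List.not_mem_nil, or_false, forall_eq_or_imp, forall_eq,
    exists_eq_or_imp, exists_eq_left, Finset.mem_insert, Finset.mem_singleton,
    Set.mem_ofPred_eq]
  by_cases h1 : x ∈ P <;> by_cases h2 : x ∈ Q <;> by_cases h3 : y ∈ P <;> by_cases h4 : y ∈ Q
  all_goals first
    | exact absurd h2 (hd h1)
    | exact absurd h4 (hd h3)
    | simp [h1, h2, h3, h4, Finset.insert_inter_of_mem, Finset.insert_inter_of_notMem, hxy,
        Finset.singleton_inter_of_mem, Finset.singleton_inter_of_notMem]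

lemma card_of_mem_boxEdges_pair {P Q X : Finset ℕ} (hPQ : Disjoint P Q)
    (hX : X ∈ boxEdges [P, Q]) : X.card = 2 := by
  simp only [boxEdges, List.mem_cons, List.not_mem_nil, or_false, forall_eq_or_imp, forall_eq,
    exists_eq_or_imp, exists_eq_left, Set.mem_ofPred_eq] at hX
  have : X = X ∩ P ∪ X ∩ Q := by
    ext x
    simp only [Finset.mem_union, Finset.mem_inter]
    exact ⟨fun hx => (hX.2 x hx).imp (And.intro hx) (And.intro hx),
      fun h => h.elim And.left And.left⟩
  rw [this, Finset.card_union_of_disjoint, hX.1.1, hX.1.2]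
  exact Finset.disjoint_of_subset_left Finset.inter_subset_right
    (Finset.disjoint_of_subset_right Finset.inter_subset_right hPQ)

/-- The elements of `A`, an interval starting at `a`, whose label belongs to `p`. -/
def labelPart (A : Finset ℕ) (a m j : ℕ) (p : Finset ℕ) : Finset ℕ :=
  A.filter fun x => label m j (x - a) ∈ p

lemma disjoint_labelPart {A : Finset ℕ} {a m j : ℕ} {p q : Finset ℕ} (h : Disjoint p q) :
    Disjoint (labelPart A a m j p) (labelPart A a m j q) := by
  rw [Finset.disjoint_left] at h ⊢
  intro x hx hx'
  exact h (Finset.mem_filter.1 hx).2 (Finset.mem_filter.1 hx').2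

lemma isBox_labelPart {A : Finset ℕ} {a m j : ℕ} {p q : Finset ℕ} (h : Disjoint p q) :
    IsBox A 2 [labelPart A a m j p, labelPart A a m j q] :=
  ⟨rfl, by simp [labelPart], by simpa using disjoint_labelPart h⟩

lemma mem_boxEdges_labelPart {A : Finset ℕ} {a m j x y : ℕ} {p : Finset ℕ × Finset ℕ}
    (h : Disjoint p.1 p.2) (hx : x ∈ A) (hy : y ∈ A) (hxy : x ≠ y) :
    {x, y} ∈ boxEdges [labelPart A a m j p.1, labelPart A a m j p.2] ↔
      Separates p (label m j (x - a)) (label m j (y - a)) := by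
  rw [mem_boxEdges_pair (disjoint_labelPart h) hxy]
  simp [labelPart, hx, hy, Separates]

lemma exists_lt_of_card_eq_two {Y : Finset ℕ} (h : Y.card = 2) : ∃ x y, x < y ∧ Y = {x, y} := by
  obtain ⟨x, y, hne, rfl⟩ := Finset.card_eq_two.1 h
  rcases lt_or_gt_of_ne hne with h | h
  · exact ⟨x, y, h, rfl⟩
  · exact ⟨y, x, h, Finset.pair_comm x y⟩

lemma Separates.lt_lt_ne {p : Finset ℕ × Finset ℕ} {m i j : ℕ} (h : Separates p i j)
    (hd : Disjoint p.1 p.2) (hm : ∀ i ∈ p.1 ∪ p.2, i < m) : i < m ∧ j < m ∧ i ≠ j := by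
  have hd' := Finset.disjoint_left.1 hd
  rcases h with h | h
  · exact ⟨hm _ (Finset.mem_union_left _ h.1), hm _ (Finset.mem_union_right _ h.2),
      fun e => hd' h.1 (e ▸ h.2)⟩
  · exact ⟨hm _ (Finset.mem_union_right _ h.1), hm _ (Finset.mem_union_left _ h.2),
      fun e => hd' h.2 (e ▸ h.1)⟩

lemma cov_pairs {q a b : ℕ}
    (hAB : Disjoint (Finset.Ico a (a + (15 * q + 1))) (Finset.Ico b (b + (15 * q + 1)))) :
    Cov (Finset.Ico a (a + (15 * q + 1)) ∪ Finset.Ico b (b + (15 * q + 1))) 4 (210 * q ^ 2)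
      (fun X => (X ∩ Finset.Ico a (a + (15 * q + 1))).card = 2 ∧
        (X ∩ Finset.Ico b (b + (15 * q + 1))).card = 2) := by
  set A := Finset.Ico a (a + (15 * q + 1)) with hA
  set B := Finset.Ico b (b + (15 * q + 1)) with hB
  have hbA : ∀ (j : ℕ) (t : Fin 14), IsBox A 2
      [labelPart A a 3 j (products t).1.1, labelPart A a 3 j (products t).1.2] :=
    fun j t => isBox_labelPart (products_disjoint t).1
  have hbB : ∀ (j : ℕ) (t : Fin 14), IsBox B 2
      [labelPart B b 5 j (products t).2.1, labelPart B b 5 j (products t).2.2] :=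
    fun j t => isBox_labelPart (products_disjoint t).2
  refine ⟨Fin (5 * q) × Fin (3 * q) × Fin 14, inferInstance, fun c =>
    [labelPart A a 3 c.1 (products c.2.2).1.1, labelPart A a 3 c.1 (products c.2.2).1.2] ++
    [labelPart B b 5 c.2.1 (products c.2.2).2.1, labelPart B b 5 c.2.1 (products c.2.2).2.2],
    ?_, fun c => (hbA _ _).append (hbB _ _) hAB, fun X hX => ?_⟩
  · simp only [Fintype.card_prod, Fintype.card_fin]
    apply le_of_eq; ring
  simp only [mem_boxEdges_append (hbA _ _) (hbB _ _) hAB hX]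
  by_cases hc : (X ∩ A).card = 2 ∧ (X ∩ B).card = 2
  swap
  · have : ∀ c : Fin (5 * q) × Fin (3 * q) × Fin 14,
        ¬ (X ∩ A ∈ boxEdges
          [labelPart A a 3 c.1 (products c.2.2).1.1, labelPart A a 3 c.1 (products c.2.2).1.2] ∧
        X ∩ B ∈ boxEdges [labelPart B b 5 c.2.1 (products c.2.2).2.1,
          labelPart B b 5 c.2.1 (products c.2.2).2.2]) := fun c h =>
      hc ⟨card_of_mem_boxEdges_pair (disjoint_labelPart (products_disjoint _).1) h.1,
        card_of_mem_boxEdges_pair (disjoint_labelPart (products_disjoint _).2) h.2⟩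
    exact ⟨fun h => absurd h hc, fun c h => absurd h (this c), fun c _ h => absurd h (this c)⟩
  obtain ⟨x, y, hxy, hXA⟩ := exists_lt_of_card_eq_two hc.1
  obtain ⟨u, v, huv, hXB⟩ := exists_lt_of_card_eq_two hc.2
  have hx : x ∈ A := (Finset.mem_inter.1 (hXA ▸ Finset.mem_insert_self x {y})).2
  have hy : y ∈ A := (Finset.mem_inter.1
    (hXA ▸ Finset.mem_insert_of_mem (Finset.mem_singleton_self y))).2
  have hu : u ∈ B := (Finset.mem_inter.1 (hXB ▸ Finset.mem_insert_self u {v})).2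
  have hv : v ∈ B := (Finset.mem_inter.1
    (hXB ▸ Finset.mem_insert_of_mem (Finset.mem_singleton_self v))).2
  have eA : ∀ j t, X ∩ A ∈ boxEdges
      [labelPart A a 3 j (products t).1.1, labelPart A a 3 j (products t).1.2] ↔
      Separates (products t).1 (label 3 j (x - a)) (label 3 j (y - a)) := fun j t => by
    rw [hXA, mem_boxEdges_labelPart (products_disjoint t).1 hx hy hxy.ne]
  have eB : ∀ j t, X ∩ B ∈ boxEdges
      [labelPart B b 5 j (products t).2.1, labelPart B b 5 j (products t).2.2] ↔
      Separates (products t).2 (label 5 j (u - b)) (label 5 j (v - b)) := fun j t => by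
    rw [hXB, mem_boxEdges_labelPart (products_disjoint t).2 hu hv huv.ne]
  simp only [eA, eB]
  rw [hA, Finset.mem_Ico] at hx hy
  rw [hB, Finset.mem_Ico] at hu hv
  have hxy' : x - a < y - a := by omega
  have huv' : u - b < v - b := by omega
  refine ⟨fun _ => ?_, fun _ _ => hc, ?_⟩
  · obtain ⟨h1, h2, h3⟩ := (label_three hxy').2 rfl
    obtain ⟨h4, h5, h6⟩ := (label_five huv').2 rfl
    obtain ⟨t, ht⟩ := products_exists ⟨_, h1⟩ ⟨_, h2⟩ ⟨_, h4⟩ ⟨_, h5⟩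
      (by simpa using h3) (by simpa using h6)
    exact ⟨(⟨(x - a) / 3, by omega⟩, ⟨(u - b) / 5, by omega⟩, t), ht⟩
  · rintro ⟨j, k, t⟩ ⟨j', k', t'⟩ ⟨h1, h2⟩ ⟨h1', h2'⟩
    dsimp only at h1 h2 h1' h2'
    have hj := (label_three hxy').1 (h1.lt_lt_ne (products_disjoint t).1 (products_lt t).1)
    have hj' := (label_three hxy').1 (h1'.lt_lt_ne (products_disjoint t').1 (products_lt t').1)
    have hk := (label_five huv').1 (h2.lt_lt_ne (products_disjoint t).2 (products_lt t).2)
    have hk' := (label_five huv').1 (h2'.lt_lt_ne (products_disjoint t').2 (products_lt t').2)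
    rw [hj] at h1
    rw [hj'] at h1'
    rw [hk] at h2
    rw [hk'] at h2'
    have ht := eq_of_separates h1 h2 h1' h2'
    rw [Prod.mk.injEq, Prod.mk.injEq, Fin.ext_iff, Fin.ext_iff]
    exact ⟨hj.trans hj'.symm, hk.trans hk'.symm, ht⟩

/-- The `s`-th interval of length `T`. -/
def interval (T s : ℕ) : Finset ℕ := Finset.Ico (s * T) (s * T + T)

lemma disjoint_interval {T s t : ℕ} (h : s ≠ t) : Disjoint (interval T s) (interval T t) := by
  rw [Finset.disjoint_left]
  intro x hx hx'
  simp only [interval, Finset.mem_Ico] at hx hx'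
  rcases lt_or_gt_of_ne h with h | h
  · have := Nat.mul_le_mul_right T (Nat.succ_le_of_lt h)
    rw [Nat.succ_mul] at this
    omega
  · have := Nat.mul_le_mul_right T (Nat.succ_le_of_lt h)
    rw [Nat.succ_mul] at this
    omega

/-- The sets meeting the `s`-th interval in `ρ s` elements, for `s ∈ S`, can be partitioned
with `k` boxes. -/
def CovPattern {L : ℕ} (T : ℕ) (ρ : Fin L → ℕ) (S : Finset (Fin L)) (k : ℕ) : Prop :=
  Cov (S.biUnion fun s => interval T s) (∑ s ∈ S, ρ s) k
    (fun X => ∀ s ∈ S, (X ∩ interval T s).card = ρ s)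

section Pattern

variable {L T : ℕ} {ρ : Fin L → ℕ}

lemma CovPattern.union {S S' : Finset (Fin L)} {k k' : ℕ}
    (h : CovPattern T ρ S k) (h' : CovPattern T ρ S' k') (hd : Disjoint S S') :
    CovPattern T ρ (S ∪ S') (k * k') := by
  have hd' : Disjoint (S.biUnion fun s => interval T s) (S'.biUnion fun s => interval T s) := by
    simp only [Finset.disjoint_biUnion_left, Finset.disjoint_biUnion_right]
    exact fun s hs t ht => disjoint_interval fun e =>
      Finset.disjoint_left.1 hd ht (Fin.ext e ▸ hs)
  have := Cov.prod h h' hd'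
  unfold CovPattern
  rw [Finset.union_biUnion, Finset.sum_union hd]
  refine this.congr fun X _ => ?_
  have e : ∀ (S : Finset (Fin L)) (s), s ∈ S →
      X ∩ (S.biUnion fun s => interval T s) ∩ interval T s = X ∩ interval T s :=
    fun S s hs => by
      rw [Finset.inter_assoc,
        Finset.inter_eq_right.2
          (Finset.subset_biUnion_of_mem (fun s : Fin L => interval T s) hs)]
  rw [Finset.forall_mem_union]
  refine and_congr (forall₂_congr fun s hs => ?_) (forall₂_congr fun s hs => ?_)
  · rw [e S s hs]
  · rw [e S' s hs]

lemma covPattern_empty : CovPattern T ρ ∅ 1 := by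
  simpa [CovPattern] using cov_nil (fun _ => True) trivial

lemma covPattern_singleton (s : Fin L) : CovPattern T ρ {s} (T.choose (ρ s / 2)) := by
  have := cov_card (ρ s) (s * T) (s * T + T)
  rw [Nat.add_sub_cancel_left] at this
  unfold CovPattern
  rw [Finset.singleton_biUnion, Finset.sum_singleton]
  refine this.congr fun X hX => ?_
  simp [interval, Finset.inter_eq_left.2 hX]

lemma covPattern_prod (S : Finset (Fin L)) :
    CovPattern T ρ S (∏ s ∈ S, T.choose (ρ s / 2)) := by
  induction S using Finset.induction_on with
  | empty => exact covPattern_empty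
  | insert s S hs ih =>
    rw [Finset.prod_insert hs, Finset.insert_eq]
    exact (covPattern_singleton s).union ih (Finset.disjoint_singleton_left.2 hs)

lemma covPattern_pair {q : ℕ} {s t : Fin L} (hst : s ≠ t) (hs : ρ s = 2) (ht : ρ t = 2) :
    CovPattern (15 * q + 1) ρ {s, t} (210 * q ^ 2) := by
  have := cov_pairs (q := q) (a := s * (15 * q + 1)) (b := t * (15 * q + 1))
    (disjoint_interval fun e => hst (Fin.ext e))
  unfold CovPattern
  rw [Finset.biUnion_insert, Finset.singleton_biUnion, Finset.sum_pair hst, hs, ht]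
  refine this.congr fun X hX => ?_
  simp [hs, ht, interval]

lemma covPattern_two {q j : ℕ} {S : Finset (Fin L)} (hS : S.card = 2 * j + 1)
    (h : ∀ s ∈ S, ρ s = 2) :
    CovPattern (15 * q + 1) ρ S ((210 * q ^ 2) ^ j * (15 * q + 1)) := by
  induction j generalizing S with
  | zero =>
    obtain ⟨s, rfl⟩ := Finset.card_eq_one.1 hS
    have := covPattern_singleton (T := 15 * q + 1) (ρ := ρ) s
    rw [h s (by simp)] at this
    simpa using this
  | succ j ih =>
    obtain ⟨P, hPS, hP⟩ := Finset.exists_subset_card_eq (show 2 ≤ S.card by omega)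
    obtain ⟨s, t, hst, rfl⟩ := Finset.card_eq_two.1 hP
    have h1 := ih (S := S \ {s, t}) (by rw [Finset.card_sdiff_of_subset hPS]; omega)
      fun x hx => h x (Finset.mem_sdiff.1 hx).1
    have h2 := (covPattern_pair (q := q) (ρ := ρ) hst (h s (hPS (by simp)))
      (h t (hPS (by simp)))).union h1 Finset.disjoint_sdiff
    rw [Finset.union_sdiff_of_subset hPS] at h2
    rwa [pow_succ', mul_assoc]

lemma covPattern_univ_two {q j : ℕ} {S : Finset (Fin L)} (hS : S.card = 2 * j + 1)
    (hρ : ρ = fun s => if s ∈ S then 2 else 0) :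
    CovPattern (15 * q + 1) ρ Finset.univ ((210 * q ^ 2) ^ j * (15 * q + 1)) := by
  have h1 := covPattern_two (q := q) (ρ := ρ) hS (fun s hs => by simp [hρ, hs])
  have h2 := h1.union (covPattern_prod Sᶜ) disjoint_compl_right
  rw [Finset.union_compl, Finset.prod_eq_one fun s hs => ?_, mul_one] at h2
  · exact h2
  · simp [hρ, Finset.mem_compl.1 hs]

lemma covPattern_univ_pow {d : ℕ} (hT : 0 < T) (hd : ∑ s, ρ s / 2 ≤ d) :
    CovPattern T ρ Finset.univ (T ^ d) := by
  refine (covPattern_prod Finset.univ).mono ?_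
  calc ∏ s, T.choose (ρ s / 2) ≤ ∏ s, T ^ (ρ s / 2) :=
        Finset.prod_le_prod' fun s _ => Nat.choose_le_pow _ _
    _ = T ^ ∑ s, ρ s / 2 := Finset.prod_pow_eq_pow_sum _ _ _
    _ ≤ T ^ d := Nat.pow_le_pow_right hT hd

end Pattern

lemma biUnion_interval (L T : ℕ) :
    (Finset.univ.biUnion fun s : Fin L => interval T s) = Finset.range (L * T) := by
  ext x
  simp only [interval, Finset.mem_biUnion, Finset.mem_univ, true_and, Finset.mem_Ico,
    Finset.mem_range]
  constructor
  · rintro ⟨s, -, h⟩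
    have := Nat.mul_le_mul_right T (Nat.succ_le_of_lt s.2)
    rw [Nat.succ_mul] at this
    omega
  · intro h
    refine ⟨⟨x / T, Nat.div_lt_of_lt_mul (by rwa [mul_comm])⟩, Nat.div_mul_le_self x T, ?_⟩
    have hT : 0 < T := Nat.pos_of_ne_zero fun h0 => by simp [h0] at h
    exact Nat.lt_div_mul_add hT

lemma cov_card_of_patterns {L T r : ℕ} (N : (Fin L → ℕ) → ℕ)
    (h : ∀ ρ : Fin L → ℕ, ∑ s, ρ s = r → CovPattern T ρ Finset.univ (N ρ)) :
    Cov (Finset.range (L * T)) r (∑ ρ ∈ Finset.piAntidiag Finset.univ r, N ρ)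
      (fun X => X.card = r) := by
  rw [← Finset.sum_coe_sort]
  refine Cov.iUnion (fun _ => Finset.range (L * T)) _
    (fun ρ X => ∀ s : Fin L, (X ∩ interval T s).card = ρ.1 s) (fun _ => subset_rfl) (fun ρ => ?_)
    (fun X hX => ?_) fun X _ ρ σ _ _ hρ hσ => Subtype.ext (funext fun s => (hρ s).symm.trans (hσ s))
  · have hρ := (Finset.mem_piAntidiag.1 ρ.2).1
    have := h ρ.1 hρ
    unfold CovPattern at this
    rw [hρ, biUnion_interval] at this
    simpa using this
  · have hc : X.card = ∑ s : Fin L, (X ∩ interval T s).card := by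
      rw [← Finset.card_biUnion fun s _ t _ hst => Finset.disjoint_of_subset_left
        Finset.inter_subset_right (Finset.disjoint_of_subset_right Finset.inter_subset_right
          (disjoint_interval fun e => hst (Fin.ext e))), ← Finset.inter_biUnion,
        biUnion_interval, Finset.inter_eq_left.2 hX]
    constructor
    · intro hr
      exact ⟨⟨fun s => (X ∩ interval T s).card, by simp [← hc, hr]⟩, hX, fun s => rfl⟩
    · rintro ⟨ρ, -, hρ⟩
      rw [hc, Finset.sum_congr rfl fun s _ => hρ s]
      exact (Finset.mem_piAntidiag.1 ρ.2).1

lemma card_even_patterns (L k : ℕ) :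
    ((Finset.piAntidiag (Finset.univ : Finset (Fin L)) (2 * k)).filter
      fun ρ => ∀ s, 2 ∣ ρ s).card = (L + k - 1).choose k := by
  have := Finset.map_nsmul_piAntidiag_univ (ι := Fin L) k two_ne_zero
  rw [Finset.filter_congr_decidable] at this
  rw [← this, Finset.card_map,
    ← Finset.map_sym_eq_piAntidiag, Finset.card_map, Finset.sym_univ, Finset.card_univ,
    Sym.card_sym_eq_choose, Fintype.card_fin]

/-- The patterns with values `2` on a `k`-element set and `0` elsewhere. -/
def twoPatterns (L k : ℕ) : Finset (Fin L → ℕ) :=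
  (Finset.powersetCard k Finset.univ).image fun S s => if s ∈ S then 2 else 0

lemma card_twoPatterns (L k : ℕ) : (twoPatterns L k).card = L.choose k := by
  rw [twoPatterns, Finset.card_image_of_injective, Finset.card_powersetCard, Finset.card_univ,
    Fintype.card_fin]
  intro S S' h
  ext s
  have := congrFun h s
  by_cases h1 : s ∈ S <;> by_cases h2 : s ∈ S' <;> simp_all

lemma twoPatterns_subset (L k : ℕ) : twoPatterns L k ⊆
    (Finset.piAntidiag (Finset.univ : Finset (Fin L)) (2 * k)).filter fun ρ => ∀ s, 2 ∣ ρ s := by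
  intro ρ hρ
  obtain ⟨S, hS, rfl⟩ := Finset.mem_image.1 hρ
  rw [Finset.mem_powersetCard_univ] at hS
  simp only [Finset.mem_filter, Finset.mem_piAntidiag]
  refine ⟨⟨?_, by simp⟩, fun s => ?_⟩
  · simp [hS, mul_comm]
  · split_ifs <;> simp

lemma f_even_le {L j q m : ℕ} (hm : m ≤ L * (15 * q + 1)) : f (2 * (2 * j + 1)) m ≤
    L.choose (2 * j + 1) * ((210 * q ^ 2) ^ j * (15 * q + 1)) +
    ((L + (2 * j + 1) - 1).choose (2 * j + 1) - L.choose (2 * j + 1)) *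
      (15 * q + 1) ^ (2 * j + 1) +
    (Finset.piAntidiag (Finset.univ : Finset (Fin L)) (2 * (2 * j + 1))).card *
      (15 * q + 1) ^ (2 * j) := by
  classical
  set T := 15 * q + 1 with hT
  set k := 2 * j + 1 with hk
  set A := Finset.piAntidiag (Finset.univ : Finset (Fin L)) (2 * k)
  set E := A.filter fun ρ => ∀ s, 2 ∣ ρ s with hE
  let N : (Fin L → ℕ) → ℕ := fun ρ =>
    if ρ ∈ twoPatterns L k then (210 * q ^ 2) ^ j * T else if ∀ s, 2 ∣ ρ s then T ^ k
    else T ^ (2 * j)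
  have hN : ∀ ρ : Fin L → ℕ, ∑ s, ρ s = 2 * k → CovPattern T ρ Finset.univ (N ρ) := by
    intro ρ hρ
    have hsum : ∀ s, ρ s / 2 * 2 ≤ ρ s := fun s => Nat.div_mul_le_self _ _
    simp only [N]
    split_ifs with h1 h2
    · obtain ⟨S, hS, rfl⟩ := Finset.mem_image.1 h1
      exact covPattern_univ_two (Finset.mem_powersetCard_univ.1 hS) rfl
    · refine covPattern_univ_pow (by omega) ?_
      have := Finset.sum_le_sum fun s (_ : s ∈ Finset.univ) => hsum s
      rw [← Finset.sum_mul] at this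
      omega
    · refine covPattern_univ_pow (by omega) ?_
      push Not at h2
      obtain ⟨s, hs⟩ := h2
      have := Finset.sum_lt_sum (fun s (_ : s ∈ Finset.univ) => hsum s)
        ⟨s, Finset.mem_univ s, by omega⟩
      rw [← Finset.sum_mul] at this
      omega
  refine (f_le_of_cov ((cov_card_of_patterns N hN).restrict
    (Finset.range_subset_range.2 hm))).trans ?_
  rw [← Finset.sum_filter_add_sum_filter_not A (fun ρ => ∀ s, 2 ∣ ρ s)]
  refine Nat.add_le_add ?_ ?_
  · rw [← hE, ← Finset.sum_sdiff (twoPatterns_subset L k), add_comm]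
    refine Nat.add_le_add ?_ ?_
    · rw [Finset.sum_congr rfl fun ρ hρ => (if_pos hρ : N ρ = _), Finset.sum_const,
        card_twoPatterns, smul_eq_mul]
    · rw [Finset.sum_congr rfl fun ρ hρ => ((if_neg (Finset.mem_sdiff.1 hρ).2).trans
        (if_pos (Finset.mem_filter.1 (Finset.mem_sdiff.1 hρ).1).2) : N ρ = _), Finset.sum_const,
        smul_eq_mul, Finset.card_sdiff_of_subset (twoPatterns_subset L k), card_even_patterns,
        card_twoPatterns]
  · refine (Finset.sum_le_card_nsmul _ _ (T ^ (2 * j)) fun ρ hρ => ?_).trans ?_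
    · have h2 := (Finset.mem_filter.1 hρ).2
      have h1 : ρ ∉ twoPatterns L k := fun h =>
        h2 (Finset.mem_filter.1 (twoPatterns_subset L k h)).2
      simp only [N, if_neg h1, if_neg h2, le_refl]
    · rw [smul_eq_mul]
      exact Nat.mul_le_mul_right _ (Finset.card_filter_le _ _)

lemma choose_bound : 1000 * 2 * (Nat.factorial 31 * ((10000 : ℕ).choose 31 * (210 ^ 15 * 15) +
    ((10030 : ℕ).choose 31 - (10000 : ℕ).choose 31) * 15 ^ 31)) < 981 * (15 * 10000) ^ 31 := by
  norm_num [Nat.choose_eq_descFactorial_div_factorial, Nat.descFactorial, Nat.factorial]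

lemma eventually_bound (K : ℝ) : ∀ᶠ q : ℕ in Filter.atTop,
    2 * (Nat.factorial 31 : ℝ) * ((10000 : ℕ).choose 31 * ((210 * (q : ℝ) ^ 2) ^ 15 * (15 * q + 1))
      + ((10030 : ℕ).choose 31 - (10000 : ℕ).choose 31 : ℕ) * (15 * (q : ℝ) + 1) ^ 31
      + K * (15 * (q : ℝ) + 1) ^ 30) ≤ 0.981 * (150000 * ((q : ℝ) - 1) - 30) ^ 31 := by
  set e : ℝ := ((10000 : ℕ).choose 31 : ℝ) with he
  set d : ℝ := (((10030 : ℕ).choose 31 - (10000 : ℕ).choose 31 : ℕ) : ℝ) with hd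
  set c : ℝ := (Nat.factorial 31 : ℝ) with hc
  let h : ℝ → ℝ := fun u => 0.981 * (150000 * (1 - u) - 30 * u) ^ 31 -
    2 * c * (e * (210 ^ 15 * (15 + u)) + d * (15 + u) ^ 31 + K * (u * (15 + u) ^ 30))
  have hcont : Continuous h := by fun_prop
  have h0 : 0 < h 0 := by
    have := (Nat.cast_lt (α := ℝ)).2 choose_bound
    push_cast [-Nat.cast_sub, ← he, ← hd, ← hc] at this
    simp only [h]
    norm_num at this ⊢
    linarith
  have ht : Filter.Tendsto (fun q : ℕ => h ((q : ℝ)⁻¹)) Filter.atTop (nhds (h 0)) :=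
    (hcont.tendsto 0).comp (tendsto_inv_atTop_zero.comp tendsto_natCast_atTop_atTop)
  filter_upwards [ht.eventually (lt_mem_nhds h0), Filter.eventually_gt_atTop 0] with q hq hq0
  have hq1 : (0 : ℝ) < q := Nat.cast_pos.2 hq0
  obtain ⟨u, hu⟩ : ∃ u : ℝ, u = (q : ℝ)⁻¹ := ⟨_, rfl⟩
  have hqu : (q : ℝ) * u = 1 := by rw [hu]; exact mul_inv_cancel₀ hq1.ne'
  rw [← hu] at hq
  generalize (q : ℝ) = x at *
  have e1 : 15 * x + 1 = x * (15 + u) := by linear_combination -hqu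
  have e2 : 150000 * (x - 1) - 30 = x * (150000 * (1 - u) - 30 * u) := by
    linear_combination 150030 * hqu
  have e3 : x ^ 30 = x ^ 31 * u := by linear_combination -x ^ 30 * hqu
  have := mul_pos (pow_pos hq1 31) hq
  rw [e1, e2, mul_pow, mul_pow x, mul_pow x (15 + u) 30, e3]
  simp only [h] at this
  linear_combination this.le

lemma f_even_le_real {L M j k r q m : ℕ} {K : ℝ} (hk : k = 2 * j + 1) (hr : r = 2 * k)
    (hM : M = L + k - 1) (hm : m ≤ L * (15 * q + 1))
    (hK : K = ((Finset.piAntidiag (Finset.univ : Finset (Fin L)) r).card : ℝ)) :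
    (f r m : ℝ) ≤ (L.choose k : ℝ) * ((210 * (q : ℝ) ^ 2) ^ j * (15 * q + 1))
      + (M.choose k - L.choose k : ℕ) * (15 * (q : ℝ) + 1) ^ k
      + K * (15 * (q : ℝ) + 1) ^ (2 * j) := by
  subst hK hM hr hk
  exact_mod_cast f_even_le (j := j) hm

lemma two_mul_le_of_factorial_bound {F c s p r C : ℝ} (hF : F ≤ s) (hs : 2 * c * s ≤ 0.981 * p)
    (hp : p ≤ r) (hr : r ≤ c * C) (hc : 0 < c) : 2 * F ≤ 0.981 * C := by
  refine le_of_mul_le_mul_left ?_ hc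
  have := mul_le_mul_of_nonneg_left hF hc.le
  linarith

end GrahamPollak

theorem f62_f63_product_bound (ε : ℝ) (hε : 0 < ε) :
    ∃ N : ℕ, ∀ n : ℕ, Even n → N ≤ n →
      2 * (f 62 (n / 2) : ℝ) * (f 63 (n / 2) : ℝ)
        ≤ 0.981 * (1 + ε) * ((n / 2).choose 31 : ℝ) ^ 2 := by
  obtain ⟨Q, hQ⟩ := Filter.eventually_atTop.1 (GrahamPollak.eventually_bound
    ((Finset.piAntidiag (Finset.univ : Finset (Fin 10000)) 62).card : ℝ))
  refine ⟨2 * (150000 * (Q + 1)), fun n _ hn => ?_⟩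
  obtain ⟨m, hm⟩ : ∃ m, m = n / 2 := ⟨_, rfl⟩
  rw [← hm]
  obtain ⟨q, hq⟩ : ∃ q, q = m / 150000 + 1 := ⟨_, rfl⟩
  have hqQ : Q ≤ q ∧ 2 ≤ q := by omega
  have h63 : (f 63 m : ℝ) ≤ (m.choose 31 : ℝ) := by
    exact_mod_cast GrahamPollak.f_le_choose 63 m
  have h62 := GrahamPollak.f_even_le_real (L := 10000) (M := 10030) (j := 15) (k := 31) (r := 62)
    (q := q) (m := m) (by norm_num) (by norm_num) (by norm_num) (by omega) rfl
  have hb := hQ q hqQ.1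
  have hf : (0 : ℝ) < Nat.factorial 31 := Nat.cast_pos.2 (Nat.factorial_pos 31)
  have hchoose : ((m + 1 - 31 : ℕ) : ℝ) ^ 31 ≤ (Nat.factorial 31 : ℝ) * (m.choose 31 : ℝ) := by
    have := Nat.pow_le_choose (α := ℝ) 31 m
    rw [div_le_iff₀ hf, mul_comm] at this
    exact_mod_cast this
  have hpow : (150000 * ((q : ℝ) - 1) - 30) ^ 31 ≤ ((m + 1 - 31 : ℕ) : ℝ) ^ 31 := by
    have h2 : (2 : ℝ) ≤ q := by exact_mod_cast hqQ.2
    refine pow_le_pow_left₀ (by linarith) ?_ 31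
    have : 150000 * q ≤ (m + 1 - 31) + 30 + 150000 := by omega
    have : (150000 : ℝ) * q ≤ ((m + 1 - 31 : ℕ) : ℝ) + 30 + 150000 := by exact_mod_cast this
    linarith
  have hmain : 2 * (f 62 m : ℝ) ≤ 0.981 * (m.choose 31 : ℝ) :=
    GrahamPollak.two_mul_le_of_factorial_bound h62 hb hpow hchoose hf
  have hc : (0 : ℝ) ≤ (m.choose 31 : ℝ) := Nat.cast_nonneg _
  calc 2 * (f 62 m : ℝ) * (f 63 m : ℝ) ≤ 0.981 * (m.choose 31 : ℝ) * (m.choose 31 : ℝ) :=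
        mul_le_mul hmain h63 (Nat.cast_nonneg _) (by positivity)
    _ ≤ 0.981 * (1 + ε) * (m.choose 31 : ℝ) ^ 2 := by
        nlinarith [mul_nonneg hε.le (sq_nonneg (m.choose 31 : ℝ))]
end
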